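/- Let F : ℝ^m → ℝ be L-smooth and set L' = L + 1. Let (z_k) be generated by z_{k+1} = z_k + t_k s_k with t_k > 0, where ‖g_k − ∇F(z_k)‖₂ ≤ δ_k, c₁‖g_k‖₂² ≤ −g_kᵀ s_k, and ‖s_k‖₂ ≤ c₂‖g_k‖₂ with c₁, c₂ > 0. Suppose there exists β ∈ [0, c₁/(c₂√L')) such that δ_k ≤ β‖g_k‖₂ for all k. Define Δ = c₁² − L' c₂² β², t̄₁ = (c₁ − √Δ)/(c₂² L'), t̄₂ = (c₁ + √Δ)/(c₂² L'). Then for every k, F(z_{k+1}) ≤ F(z_k) − (c₂² L'/2)(t_k − t̄₁)(t̄₂ − t_k)‖g_k‖₂². -/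

import Mathlib

open scoped RealInnerProductSpace

theorem descent_aux {E : Type*} [NormedAddCommGroup E] [InnerProductSpace ℝ E] [CompleteSpace E]
    (F : E → ℝ) (L : ℝ) (hdiff : Differentiable ℝ F)
    (hlip : ∀ x y : E, ‖gradient F x - gradient F y‖ ≤ L * ‖x - y‖) (x v : E) :
    F (x + v) ≤ F x + ⟪gradient F x, v⟫ + L / 2 * ‖v‖ ^ 2 := by
  have hd : ∀ r : ℝ, HasDerivAt (fun r : ℝ => F (x + r • v)) ⟪gradient F (x + r • v), v⟫ r := by
    intro r
    have h1 : HasDerivAt (fun r : ℝ => x + r • v) v r := by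
      simpa using ((hasDerivAt_id r).smul_const v).const_add x
    have h2 := (hdiff (x + r • v)).hasGradientAt.hasFDerivAt.comp_hasDerivAt r h1
    simp only [inner_gradient_left, InnerProductSpace.toDual_apply_apply] at h2 ⊢
    exact h2
  have hB : ∀ r : ℝ, HasDerivAt
      (fun r : ℝ => F x + r * ⟪gradient F x, v⟫ + L / 2 * ‖v‖ ^ 2 * r ^ 2)
      (⟪gradient F x, v⟫ + L * r * ‖v‖ ^ 2) r := by
    intro r
    have h := (((hasDerivAt_id r).mul_const ⟪gradient F x, v⟫).const_add (F x)).add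
      ((hasDerivAt_pow 2 r).const_mul (L / 2 * ‖v‖ ^ 2))
    refine h.congr_deriv ?_
    simp
    ring
  have key := image_le_of_deriv_right_le_deriv_boundary (a := 0) (b := 1)
    (fun r _ => (hd r).continuousAt.continuousWithinAt)
    (fun r _ => (hd r).hasDerivWithinAt) (by simp)
    (fun r _ => (hB r).continuousAt.continuousWithinAt)
    (fun r _ => (hB r).hasDerivWithinAt) (by
      intro r hr
      have h1 := hlip (x + r • v) x
      rw [add_sub_cancel_left, norm_smul, Real.norm_of_nonneg hr.1] at h1
      have h2 := real_inner_le_norm (gradient F (x + r • v) - gradient F x) v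
      rw [inner_sub_left] at h2
      have h3 := mul_le_mul_of_nonneg_right h1 (norm_nonneg v)
      nlinarith) (x := 1) (by simp)
  simpa using key

/-- descent inequality under gradient-proportional error tolerances. -/
theorem stmt_3 (m : ℕ) (F : EuclideanSpace ℝ (Fin m) → ℝ) (L L' : ℝ)
    (hdiff : Differentiable ℝ F)
    (hlip : ∀ x y : EuclideanSpace ℝ (Fin m), ‖gradient F x - gradient F y‖ ≤ L * ‖x - y‖)
    (hL' : L' = L + 1)
    (z s g : ℕ → EuclideanSpace ℝ (Fin m)) (t δ : ℕ → ℝ)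
    (c₁ c₂ : ℝ) (hc₁ : 0 < c₁) (hc₂ : 0 < c₂)
    (ht : ∀ k, 0 < t k) (hδ : ∀ k, 0 ≤ δ k)
    (hupd : ∀ k, z (k + 1) = z k + t k • s k)
    (herr : ∀ k, ‖g k - gradient F (z k)‖ ≤ δ k)
    (hdesc : ∀ k, c₁ * ‖g k‖ ^ 2 ≤ -⟪g k, s k⟫)
    (hbnd : ∀ k, ‖s k‖ ≤ c₂ * ‖g k‖)
    (β : ℝ) (hβ0 : 0 ≤ β) (hβ1 : β < c₁ / (c₂ * Real.sqrt L'))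
    (hδβ : ∀ k, δ k ≤ β * ‖g k‖)
    (Δ t₁ t₂ : ℝ)
    (hΔ : Δ = c₁ ^ 2 - L' * c₂ ^ 2 * β ^ 2)
    (ht₁ : t₁ = (c₁ - Real.sqrt Δ) / (c₂ ^ 2 * L'))
    (ht₂ : t₂ = (c₁ + Real.sqrt Δ) / (c₂ ^ 2 * L')) :
    ∀ k, F (z (k + 1)) ≤
      F (z k) - (c₂ ^ 2 * L' / 2) * (t k - t₁) * (t₂ - t k) * ‖g k‖ ^ 2 := by
  intro k
  have hL0 : 0 < L' := by
    by_contra h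
    rw [Real.sqrt_eq_zero_of_nonpos (not_lt.mp h)] at hβ1
    simp at hβ1
    linarith
  have hsq : 0 < Real.sqrt L' := Real.sqrt_pos.mpr hL0
  have hss : Real.sqrt L' ^ 2 = L' := Real.sq_sqrt hL0.le
  rw [lt_div_iff₀ (by positivity)] at hβ1
  have hΔ0 : 0 ≤ Δ := by
    have h := pow_le_pow_left₀ (by positivity) hβ1.le 2
    rw [mul_pow, mul_pow, hss] at h
    rw [hΔ]
    linarith
  have hsΔ : Real.sqrt Δ ^ 2 = Δ := Real.sq_sqrt hΔ0
  have hid : (c₂ ^ 2 * L' / 2) * (t k - t₁) * (t₂ - t k)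
      = c₁ * t k - β ^ 2 / 2 - c₂ ^ 2 * L' / 2 * t k ^ 2 := by
    have e : (c₂ ^ 2 * L' / 2) * (t k - t₁) * (t₂ - t k)
      = c₁ * t k - (c₁ ^ 2 - Real.sqrt Δ ^ 2) / (2 * (c₂ ^ 2 * L'))
        - c₂ ^ 2 * L' / 2 * t k ^ 2 := by
      rw [ht₁, ht₂]
      field_simp
      ring
    rw [e, hsΔ, hΔ]
    field_simp
    ring
  rw [hid, hupd k]
  have h1 := descent_aux F L hdiff hlip (z k) (t k • s k)
  have htk := ht k
  rw [inner_smul_right, norm_smul, Real.norm_of_nonneg htk.le] at h1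
  have h2 := real_inner_le_norm (gradient F (z k) - g k) (s k)
  rw [inner_sub_left, norm_sub_rev] at h2
  have h3 : ‖g k - gradient F (z k)‖ ≤ β * ‖g k‖ := (herr k).trans (hδβ k)
  have h4 := mul_le_mul_of_nonneg_right h3 (norm_nonneg (s k))
  have h5 : ⟪gradient F (z k), s k⟫ ≤ - (c₁ * ‖g k‖ ^ 2) + β * ‖g k‖ * ‖s k‖ := by
    linarith [hdesc k]
  have h6 := mul_le_mul_of_nonneg_left h5 htk.le
  have h7 := pow_le_pow_left₀ (norm_nonneg _) (hbnd k) 2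
  have h8 := mul_le_mul_of_nonneg_left h7 (by positivity : 0 ≤ L' / 2 * t k ^ 2)
  have h9 := sq_nonneg (β * ‖g k‖ - t k * ‖s k‖)
  have hL : L = L' - 1 := by linarith
  rw [hL] at h1
  nlinarith
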